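/- Let π* be an optimal assignment for weights w and let Δ^k be the iterates of the recursive sensitivity algorithm. Then for every edge (a,b) assigned in π*, the sequence k ↦ Δ^k(a,b) is monotone non-decreasing, and for every edge (a,b) not assigned in π*, the sequence k ↦ Δ^k(a,b) is monotone non-increasing. -/

import Mathlib

open Finset Filter Topology

/-- Cost of an assignment `π : T → A` under weights `w : A × T → ℝ`. -/
noncomputable def cost {A T : Type*} [Fintype T] (w : A × T → ℝ) (π : T → A) : ℝ :=
  ∑ b : T, w (π b, b)

/-- `πs` is an optimal assignment for weights `w`: it is injective (an assignment)
and minimizes the cost among all assignments. -/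
def Optimal {A T : Type*} [Fintype T] (w : A × T → ℝ) (πs : T → A) : Prop :=
  Function.Injective πs ∧ ∀ π : T → A, Function.Injective π → cost w πs ≤ cost w π

/-- `δ` is an allowable perturbation for `(w, πs)`: `πs` remains optimal for `w + δ`. -/
def Allowable {A T : Type*} [Fintype T] (w δ : A × T → ℝ) (πs : T → A) : Prop :=
  Optimal (w + δ) πs

-- The element-wise sensitivity of edge `(a, b)` for weights `w` and assignment `πs`.
open Classical in
noncomputable def sens {A T : Type*} [Fintype T] (w : A × T → ℝ) (πs : T → A)
    (a : A) (b : T) : ℝ :=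
  if πs b = a then
    sInf {c | ∃ π : T → A, Function.Injective π ∧ π b ≠ a ∧ cost w π = c} - cost w πs
  else
    cost w πs - sInf {c | ∃ π : T → A, Function.Injective π ∧ π b = a ∧ cost w π = c}

/-- Iterates of the recursive sensitivity algorithm: `Δ⁰ = 0` and
`Δ^{k+1}(a,b) = Δ^k(a,b) + s_{w+Δ^k}(a,b)/(2N)` with `N = |T|`. -/
noncomputable def iter {A T : Type*} [Fintype T] (w : A × T → ℝ) (πs : T → A) :
    ℕ → (A × T → ℝ)
  | 0 => 0
  | k + 1 => fun e =>
      iter w πs k e + sens (w + iter w πs k) πs e.1 e.2 / (2 * (Fintype.card T : ℝ))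

section Sensitivity

variable {A T : Type*} [Fintype T] {w : A × T → ℝ} {πs : T → A}

lemma Optimal.bddBelow_costs (h : Optimal w πs) (P : (T → A) → Prop) :
    BddBelow {c | ∃ π : T → A, Function.Injective π ∧ P π ∧ cost w π = c} := by
  refine ⟨cost w πs, ?_⟩
  rintro _ ⟨π, hπ, -, rfl⟩
  exact h.2 π hπ

/-- The sensitivity of an assigned edge is nonnegative. -/
lemma Optimal.sens_nonneg (h : Optimal w πs) (hT : 2 ≤ Fintype.card T) (b : T) :
    0 ≤ sens w πs (πs b) b := by
  classical
  have : Nontrivial T := Fintype.one_lt_card_iff_nontrivial.mp hT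
  obtain ⟨b', hb'⟩ := exists_ne b
  rw [sens, if_pos rfl, sub_nonneg]
  refine le_csInf ⟨_, πs ∘ Equiv.swap b b', h.1.comp (Equiv.injective _), ?_, rfl⟩ ?_
  · simpa using h.1.ne hb'
  · rintro _ ⟨π, hπ, -, rfl⟩
    exact h.2 π hπ

/-- The sensitivity of an unassigned edge is nonpositive. -/
lemma Optimal.sens_nonpos (h : Optimal w πs) {a : A} {b : T} (hab : πs b ≠ a) :
    sens w πs a b ≤ 0 := by
  classical
  rw [sens, if_neg hab, sub_nonpos]
  refine le_csInf ⟨_, Equiv.swap (πs b) a ∘ πs, (Equiv.injective _).comp h.1, ?_, rfl⟩ ?_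
  · simp
  · rintro _ ⟨π, hπ, -, rfl⟩
    exact h.2 π hπ

/-- The sensitivity of an assigned edge is at most the optimality gap of any assignment
avoiding it. -/
lemma Optimal.sens_le_gap (h : Optimal w πs) {π : T → A} (hπ : Function.Injective π) {b : T}
    (hb : π b ≠ πs b) : sens w πs (πs b) b ≤ cost w π - cost w πs := by
  rw [sens, if_pos rfl]
  exact sub_le_sub_right
    (csInf_le (h.bddBelow_costs fun π => π b ≠ πs b) ⟨π, hπ, hb, rfl⟩) _

/-- The sensitivity of an unassigned edge is at least minus the optimality gap of any assignment
using it. -/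
lemma Optimal.neg_gap_le_sens (h : Optimal w πs) {π : T → A} (hπ : Function.Injective π) {b : T}
    (hb : π b ≠ πs b) : cost w πs - cost w π ≤ sens w πs (π b) b := by
  rw [sens, if_neg hb.symm]
  exact sub_le_sub_left
    (csInf_le (h.bddBelow_costs fun π' => π' b = π b) ⟨π, hπ, rfl, rfl⟩) _

lemma cost_add (w δ : A × T → ℝ) (π : T → A) : cost (w + δ) π = cost w π + cost δ π := by
  simp [cost, Finset.sum_add_distrib]

/-- Perturbing by the sensitivities divided by `2 * |T|` preserves optimality. -/
lemma Optimal.allowable_sens_div (h : Optimal w πs) :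
    Allowable w (fun e => sens w πs e.1 e.2 / (2 * (Fintype.card T : ℝ))) πs := by
  refine ⟨h.1, fun π hπ => ?_⟩
  rcases isEmpty_or_nonempty T with hT | hT
  · simp [cost]
  have hN : (0 : ℝ) < Fintype.card T := by exact_mod_cast Fintype.card_pos
  have hgap := h.2 π hπ
  have hterm : ∀ b, sens w πs (πs b) b / (2 * (Fintype.card T : ℝ))
      - sens w πs (π b) b / (2 * (Fintype.card T : ℝ))
      ≤ (cost w π - cost w πs) / Fintype.card T := by
    intro b
    by_cases hb : π b = πs b
    · rw [hb, sub_self]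
      exact div_nonneg (sub_nonneg.mpr hgap) hN.le
    · have h₁ := h.sens_le_gap hπ hb
      have h₂ := h.neg_gap_le_sens hπ hb
      rw [← sub_div, div_le_div_iff₀ (by positivity) hN]
      nlinarith
  have hsum := Finset.sum_le_sum fun b (_ : b ∈ Finset.univ) => hterm b
  rw [Finset.sum_sub_distrib, Finset.sum_const, Finset.card_univ, nsmul_eq_mul,
    mul_div_cancel₀ _ hN.ne'] at hsum
  rw [cost_add, cost_add]
  simp only [cost] at hsum ⊢
  linarith

lemma Optimal.allowable_iter (h : Optimal w πs) (k : ℕ) : Allowable w (iter w πs k) πs := by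
  induction k with
  | zero => simpa [Allowable, iter] using h
  | succ k ih =>
    have hstep := Optimal.allowable_sens_div ih
    rw [Allowable, add_assoc] at hstep
    exact hstep

end Sensitivity

theorem stmt13 {A T : Type*} [Fintype A] [Fintype T] [Nonempty A] [Nonempty T]
    (hT : 2 ≤ Fintype.card T) (hAT : Fintype.card T ≤ Fintype.card A)
    (w : A × T → ℝ) (πs : T → A)
    (hopt : Optimal w πs) :
    ∀ a b, (πs b = a → Monotone fun k => iter w πs k (a, b)) ∧
           (πs b ≠ a → Antitone fun k => iter w πs k (a, b)) := by
  intro a b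
  have hN : (0 : ℝ) ≤ 2 * (Fintype.card T : ℝ) := by positivity
  constructor
  · rintro rfl
    exact monotone_nat_of_le_succ fun k => le_add_of_nonneg_right <|
      div_nonneg (Optimal.sens_nonneg (hopt.allowable_iter k) hT b) hN
  · intro hab
    exact antitone_nat_of_succ_le fun k => add_le_of_nonpos_right <|
      div_nonpos_of_nonpos_of_nonneg (Optimal.sens_nonpos (hopt.allowable_iter k) hab) hN
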